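/- (Halving lowers the equilibrium price and hashrate.) Let 0 < B₂ < B₁ be two block subsidies and, for i = 1,2, let H_i(P) denote the unique H > 0 with H·φ(H) = P·(B_i+Φ) and D_agg,i(P) = D(P, ς(P, H_i(P))). Suppose D_agg,i is strictly decreasing on (0,∞) for i = 1,2, and for some Q > 0 let P_i* > 0 satisfy D_agg,i(P_i*) = Q for i = 1,2. Then P₂* < P₁* and H₂(P₂*) < H₁(P₁*): the post-halving equilibrium features both a strictly lower price and a strictly lower hashrate. -/

import Mathlib

open Filter

/-!
A halving lowers the reward per unit of price, and since the cost `H * φ H` of a hashrate `H` is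
monotone in `H`, it lowers the break-even hashrate at every price. Safety and hence demand fall
with the hashrate, so at the old equilibrium price the new demand curve lies below the old demand,
and as it slopes downwards it reaches that level only at a lower price. Miner revenue at the new
equilibrium is then a product of a lower price and a lower reward, which gives the lower hashrate.
-/

theorem monotoneOn_id_mul {R : Type*} [MulZeroClass R] [Preorder R] [PosMulMono R] [MulPosMono R]
    {φ : R → R} (hφ : MonotoneOn φ (Set.Ici 0)) (hφ0 : 0 ≤ φ 0) :
    MonotoneOn (fun x => x * φ x) (Set.Ici 0) :=
  monotoneOn_id.mul hφ (fun _ hx => hx) fun _ hx => hφ0.trans (hφ Set.self_mem_Ici hx hx)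

/-- `H P` is a hashrate at which miners break even at price `P`: its cost `H P * φ (H P)`, where
`φ` is the inverse CDF of miner costs, equals the value `P * r` of the block reward. The reward
`r`, denominated in the asset, is subsidy plus fees. -/
def IsBreakEvenHashrate {R : Type*} [MulZeroClass R] [Preorder R] (φ : R → R) (r : R)
    (H : R → R) : Prop :=
  ∀ P, 0 < P → 0 < H P ∧ H P * φ (H P) = P * r

namespace IsBreakEvenHashrate

theorem lt_of_revenue_lt {R : Type*} [MulZeroClass R] [LinearOrder R] [PosMulMono R]
    [MulPosMono R] {φ H₁ H₂ : R → R} {r₁ r₂ P₁ P₂ : R}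
    (hH₁ : IsBreakEvenHashrate φ r₁ H₁) (hH₂ : IsBreakEvenHashrate φ r₂ H₂)
    (hφ : MonotoneOn φ (Set.Ici 0)) (hφ0 : 0 ≤ φ 0) (hP₁ : 0 < P₁) (hP₂ : 0 < P₂)
    (hrevenue : P₂ * r₂ < P₁ * r₁) : H₂ P₂ < H₁ P₁ := by
  obtain ⟨hH₁_pos, hcost₁⟩ := hH₁ P₁ hP₁
  obtain ⟨hH₂_pos, hcost₂⟩ := hH₂ P₂ hP₂
  rw [← hcost₁, ← hcost₂] at hrevenue
  exact (monotoneOn_id_mul hφ hφ0).reflect_lt hH₂_pos.le hH₁_pos.le hrevenue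

theorem reward_nonneg {R : Type*} [Semiring R] [PartialOrder R] [IsOrderedRing R] [Nontrivial R]
    {φ H : R → R} {r : R} (hH : IsBreakEvenHashrate φ r H) (hφ : MonotoneOn φ (Set.Ici 0))
    (hφ0 : 0 ≤ φ 0) : 0 ≤ r := by
  obtain ⟨hH_pos, hcost⟩ := hH 1 zero_lt_one
  calc
    0 ≤ H 1 * φ (H 1) :=
      mul_nonneg hH_pos.le (hφ0.trans (hφ Set.self_mem_Ici hH_pos.le hH_pos.le))
    _ = r := by rw [hcost, one_mul]

end IsBreakEvenHashrate

/-- The perceived network safety `ς(P, H)`. In the paper `Ψ` is the standard normal CDF, `σ` the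
noise in the signal and `sstar` the signal threshold. -/
noncomputable def perceivedSafety (Ψ : ℝ → ℝ) (g k σ sstar P H : ℝ) : ℝ :=
  Ψ ((sstar - g * P + k * H) / σ)

theorem perceivedSafety_strictMono {Ψ : ℝ → ℝ} (hΨ : StrictMono Ψ) {k σ : ℝ} (hk : 0 < k)
    (hσ : 0 < σ) (g sstar P : ℝ) : StrictMono (perceivedSafety Ψ g k σ sstar P) := by
  intro H H' hH
  apply hΨ
  gcongr

/-- The total asset demand `D(P, s)` at price `P` and perceived safety `s`, with price elasticity
`e` in the `θU` component. -/
noncomputable def assetDemand (θU θS δ e P s : ℝ) : ℝ :=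
  θU * s * P ^ (-e) + (θS * s - δ) * P⁻¹

theorem assetDemand_strictMono {θU θS P : ℝ} (hθU : 0 < θU) (hθS : 0 < θS) (δ e : ℝ)
    (hP : 0 < P) : StrictMono (assetDemand θU θS δ e P) := by
  intro s t hst
  unfold assetDemand
  gcongr

theorem halving_lowers_equilibrium_price_and_hashrate_general {R α : Type*} [Semiring R]
    [LinearOrder R] [IsStrictOrderedRing R] [Preorder α] {φ H₁ H₂ : R → R} {r₁ r₂ : R}
    (hφ : MonotoneOn φ (Set.Ici 0)) (hφ0 : 0 ≤ φ 0) (hr : r₂ < r₁)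
    (hH₁ : IsBreakEvenHashrate φ r₁ H₁) (hH₂ : IsBreakEvenHashrate φ r₂ H₂) {D : R → R → α}
    (hD : ∀ P, 0 < P → StrictMonoOn (D P) (Set.Ioi 0))
    (hanti₂ : AntitoneOn (fun P => D P (H₂ P)) (Set.Ioi 0)) {P₁ P₂ : R} (hP₁ : 0 < P₁)
    (hP₂ : 0 < P₂) (hclear : D P₁ (H₁ P₁) = D P₂ (H₂ P₂)) : P₂ < P₁ ∧ H₂ P₂ < H₁ P₁ := by
  have hhashrate : H₂ P₁ < H₁ P₁ :=
    hH₁.lt_of_revenue_lt hH₂ hφ hφ0 hP₁ hP₁ (mul_lt_mul_of_pos_left hr hP₁)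
  have hdemand : D P₁ (H₂ P₁) < D P₂ (H₂ P₂) :=
    (hD P₁ hP₁ (hH₂ P₁ hP₁).1 (hH₁ P₁ hP₁).1 hhashrate).trans_eq hclear
  have hprice : P₂ < P₁ := hanti₂.reflect_lt hP₁ hP₂ hdemand
  have hrevenue : P₂ * r₂ < P₁ * r₁ :=
    mul_lt_mul' hprice.le hr (hH₂.reward_nonneg hφ hφ0) hP₁
  exact ⟨hprice, hH₁.lt_of_revenue_lt hH₂ hφ hφ0 hP₁ hP₂ hrevenue⟩

/-- **Halving lowers the equilibrium price and hashrate.** Let `0 < B₂ < B₁`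
be two block subsidies and, for `i = 1,2`, let `H_i(P)` denote the unique `H > 0` with
`H·φ(H) = P·(B_i+Φ)` and `D_agg,i(P) = D(P, ς(P, H_i(P)))`. Suppose `D_agg,i` is strictly
decreasing on `(0,∞)` for `i = 1,2`, and for some `Q > 0` let `P_i* > 0` satisfy
`D_agg,i(P_i*) = Q`. Then `P₂* < P₁*` and `H₂(P₂*) < H₁(P₁*)`: the post-halving equilibrium
features both a strictly lower price and a strictly lower hashrate. -/
theorem halving_lowers_equilibrium_price_and_hashrate
    (φ : ℝ → ℝ)
    (hφc : ContinuousOn φ (Set.Ici 0))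
    (hφm : StrictMonoOn φ (Set.Ici 0))
    (hφ0 : 0 ≤ φ 0)
    (hφtop : Filter.Tendsto (fun H : ℝ => H * φ H) Filter.atTop Filter.atTop)
    (Φ : ℝ) (hΦ : 0 ≤ Φ)
    (B₁ B₂ : ℝ) (hB₂ : 0 < B₂) (hB : B₂ < B₁)
    (H₁ H₂ : ℝ → ℝ)
    (hH₁ : ∀ P : ℝ, 0 < P → 0 < H₁ P ∧ H₁ P * φ (H₁ P) = P * (B₁ + Φ))
    (hH₂ : ∀ P : ℝ, 0 < P → 0 < H₂ P ∧ H₂ P * φ (H₂ P) = P * (B₂ + Φ))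
    (Ψ : ℝ → ℝ)
    (hΨc : Continuous Ψ)
    (hΨm : StrictMono Ψ)
    (hΨ01 : ∀ x : ℝ, 0 < Ψ x ∧ Ψ x < 1)
    (hΨbot : Tendsto Ψ atBot (nhds 0))
    (hΨtop : Tendsto Ψ atTop (nhds 1))
    (g k σ sstar : ℝ) (hg : 0 < g) (hk : 0 < k) (hσ : 0 < σ)
    (θU θS δ e : ℝ) (hθU : 0 < θU) (hθS : 0 < θS) (hδ : 0 ≤ δ) (he : 0 < e)
    (hanti₁ : StrictAntiOn
      (fun P : ℝ =>
        θU * Ψ ((sstar - g * P + k * H₁ P) / σ) * P ^ (-e) +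
          (θS * Ψ ((sstar - g * P + k * H₁ P) / σ) - δ) * P⁻¹) (Set.Ioi 0))
    (hanti₂ : StrictAntiOn
      (fun P : ℝ =>
        θU * Ψ ((sstar - g * P + k * H₂ P) / σ) * P ^ (-e) +
          (θS * Ψ ((sstar - g * P + k * H₂ P) / σ) - δ) * P⁻¹) (Set.Ioi 0))
    (Q : ℝ) (hQ : 0 < Q)
    (P₁ P₂ : ℝ) (hP₁ : 0 < P₁) (hP₂ : 0 < P₂)
    (hclear₁ : θU * Ψ ((sstar - g * P₁ + k * H₁ P₁) / σ) * P₁ ^ (-e) +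
        (θS * Ψ ((sstar - g * P₁ + k * H₁ P₁) / σ) - δ) * P₁⁻¹ = Q)
    (hclear₂ : θU * Ψ ((sstar - g * P₂ + k * H₂ P₂) / σ) * P₂ ^ (-e) +
        (θS * Ψ ((sstar - g * P₂ + k * H₂ P₂) / σ) - δ) * P₂⁻¹ = Q) :
    P₂ < P₁ ∧ H₂ P₂ < H₁ P₁ :=
  halving_lowers_equilibrium_price_and_hashrate_general
    (D := fun P H => assetDemand θU θS δ e P (perceivedSafety Ψ g k σ sstar P H))
    hφm.monotoneOn hφ0 (add_lt_add_left hB Φ) hH₁ hH₂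
    (fun P hP => ((assetDemand_strictMono hθU hθS δ e hP).comp
      (perceivedSafety_strictMono hΨm hk hσ g sstar P)).strictMonoOn _)
    hanti₂.antitoneOn hP₁ hP₂ (hclear₁.trans hclear₂.symm)
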